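/- Fix k ≥ 1 and Δ > 0, and for each n ≥ k let m = m(n) = ⌈Δ n⌉ and let V = (V_1,…,V_m) be m i.i.d. uniform k-flats of F_2^n (law P_unif). Then for every ε > 0 there exists N such that for all n ≥ N, E[Z(V)^2] / (E[Z(V)])^2 ≤ 1 + ε + 1/E[Z(V)]. -/

import Mathlib

open scoped BigOperators Classical
open Filter Topology

abbrev F2n (n : ℕ) := Fin n → ZMod 2

def IsFlat (n k : ℕ) (W : Set (F2n n)) : Prop :=
  ∃ A : AffineSubspace (ZMod 2) (F2n n),
    (A : Set (F2n n)) = W ∧ W.Nonempty ∧ Module.finrank (ZMod 2) A.direction = n - k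

def Flat (n k : ℕ) : Type := {W : Set (F2n n) // IsFlat n k W}

noncomputable instance (n k : ℕ) : Fintype (Flat n k) := by
  unfold Flat; exact Fintype.ofFinite _

noncomputable def q0 (n k : ℕ) : Flat n k → ℝ :=
  fun _ => (Fintype.card (Flat n k) : ℝ)⁻¹

noncomputable def qx (n k : ℕ) (x : F2n n) : Flat n k → ℝ :=
  fun W => if x ∈ W.1 then 0 else (Nat.card {W : Flat n k // x ∉ W.1} : ℝ)⁻¹

noncomputable def prob {α : Type*} [Fintype α] (p : α → ℝ) (E : Set α) : ℝ :=
  ∑ a, if a ∈ E then p a else 0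

noncomputable def expect {α : Type*} [Fintype α] (p : α → ℝ) (f : α → ℝ) : ℝ :=
  ∑ a, p a * f a

noncomputable def Punif (n k m : ℕ) : (Fin m → Flat n k) → ℝ :=
  fun V => ∏ j, q0 n k (V j)

noncomputable def Pplanted (n k m : ℕ) : (Fin m → Flat n k) → ℝ :=
  fun V => ((2:ℝ)^n)⁻¹ * ∑ x : F2n n, ∏ j, qx n k x (V j)

noncomputable def Z (n k m : ℕ) (V : Fin m → Flat n k) : ℕ :=
  Nat.card {x : F2n n // ∀ j, x ∉ (V j).1}

noncomputable def satCount (n k m : ℕ) (V : Fin m → Flat n k) (x : F2n n) : ℕ :=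
  Nat.card {j : Fin m // x ∉ (V j).1}

noncomputable def maxSat (n k m : ℕ) (V : Fin m → Flat n k) : ℕ :=
  Finset.univ.sup (fun x : F2n n => satCount n k m V x)

noncomputable def qxpi (n k : ℕ) (x : F2n n) (π : ℝ) : Flat n k → ℝ :=
  fun W => (1 - π) * q0 n k W + π * qx n k x W

noncomputable def Pplantedpi (n k m : ℕ) (π : ℝ) : (Fin m → Flat n k) → ℝ :=
  fun V => ((2:ℝ)^n)⁻¹ * ∑ x : F2n n, ∏ j, qxpi n k x π (V j)

noncomputable def DeltaK (k : ℕ) : ℝ :=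
  Real.log (1/2) / Real.log (1 - ((2:ℝ)^k)⁻¹)

/-!
The affine group acts doubly transitively on `F_2^n`, so two distinct points lie on a common uniform
`k`-flat with a probability that does not depend on the points. All flats having the same size `s`,
averaging the number `s ^ 2` of pairs of points on a flat shows that this probability is
`s (s - 1) / (v (v - 1)) ≤ (s / v) ^ 2` with `v = 2 ^ n`: the events of covering two distinct points
are negatively correlated. The same then holds for their complements and for products over the
independent flats, so in `E[Z ^ 2]` the off-diagonal pairs contribute at most `E[Z] ^ 2` and the
diagonal contributes `E[Z]`.
-/

section FiniteProbability

variable {α β X : Type*} [Fintype α] [Fintype β] {p : α → ℝ}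

theorem prob_eq_expect_indicator (p : α → ℝ) (E : Set α) :
    prob p E = expect p (E.indicator 1) := by
  simp [prob, expect, Set.indicator_apply]

theorem prob_nonneg (hp : ∀ a, 0 ≤ p a) (E : Set α) : 0 ≤ prob p E :=
  Finset.sum_nonneg fun a _ => ite_nonneg (hp a) le_rfl

theorem expect_const (hp : ∑ a, p a = 1) (c : ℝ) : expect p (fun _ => c) = c := by
  rw [expect, ← Finset.sum_mul, hp, one_mul]

theorem expect_sum [Fintype X] (p : α → ℝ) (f : X → α → ℝ) :
    expect p (fun a => ∑ x, f x a) = ∑ x, expect p (f x) := by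
  simp only [expect, Finset.mul_sum]
  exact Finset.sum_comm

theorem prob_add_prob_compl (hp : ∑ a, p a = 1) (E : Set α) : prob p E + prob p Eᶜ = 1 := by
  rw [← hp, prob, prob, ← Finset.sum_add_distrib]
  refine Finset.sum_congr rfl fun a _ => ?_
  by_cases ha : a ∈ E <;> simp [ha]

theorem prob_compl (hp : ∑ a, p a = 1) (E : Set α) : prob p Eᶜ = 1 - prob p E :=
  eq_sub_of_add_eq' (prob_add_prob_compl hp E)

theorem prob_union_add_inter (p : α → ℝ) (E F : Set α) :
    prob p (E ∪ F) + prob p (E ∩ F) = prob p E + prob p F := by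
  simp only [prob, ← Finset.sum_add_distrib]
  refine Finset.sum_congr rfl fun a _ => ?_
  by_cases hE : a ∈ E <;> by_cases hF : a ∈ F <;> simp [hE, hF]

theorem prob_compl_inter_compl_le (hp : ∑ a, p a = 1) {E F : Set α}
    (h : prob p (E ∩ F) ≤ prob p E * prob p F) :
    prob p (Eᶜ ∩ Fᶜ) ≤ prob p Eᶜ * prob p Fᶜ := by
  rw [← Set.compl_union, prob_compl hp, prob_compl hp, prob_compl hp]
  linarith [prob_union_add_inter p E F]

theorem prob_preimage_equiv (e : α ≃ β) (q : β → ℝ) (E : Set β) :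
    prob (q ∘ e) (e ⁻¹' E) = prob q E :=
  Equiv.sum_comp e fun b => if b ∈ E then q b else 0

theorem prob_univ_pi {ι : Type*} [Fintype ι] [DecidableEq ι] {α : ι → Type*} [∀ i, Fintype (α i)]
    (p : ∀ i, α i → ℝ) (E : ∀ i, Set (α i)) :
    prob (fun a : ∀ i, α i => ∏ i, p i (a i)) (Set.univ.pi E) = ∏ i, prob (p i) (E i) := by
  simp only [prob, Finset.prod_univ_sum, Fintype.piFinset_univ, Fintype.prod_ite_zero,
    Set.mem_univ_pi]

theorem natCard_mem_eq_sum_indicator {α : Type*} [Fintype X] (A : X → Set α) (a : α) :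
    (Nat.card {x // a ∈ A x} : ℝ) = ∑ x, (A x).indicator 1 a := by
  simp [Set.indicator_apply, Fintype.card_subtype]

theorem expect_natCard_mem [Fintype X] (p : α → ℝ) (A : X → Set α) :
    expect p (fun a => (Nat.card {x // a ∈ A x} : ℝ)) = ∑ x, prob p (A x) := by
  simp only [natCard_mem_eq_sum_indicator, expect_sum, prob_eq_expect_indicator]

theorem expect_natCard_mem_sq [Fintype X] (p : α → ℝ) (A : X → Set α) :
    expect p (fun a => (Nat.card {x // a ∈ A x} : ℝ) ^ 2) = ∑ x, ∑ y, prob p (A x ∩ A y) := by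
  simp only [natCard_mem_eq_sum_indicator, sq, Finset.sum_mul_sum, expect_sum,
    prob_eq_expect_indicator, Set.inter_indicator_one, Pi.mul_def]

theorem expect_natCard_mem_sq_le [Finite X] {A : X → Set α}
    (hA : Pairwise fun x y => prob p (A x ∩ A y) ≤ prob p (A x) * prob p (A y)) :
    expect p (fun a => (Nat.card {x // a ∈ A x} : ℝ) ^ 2) ≤
      expect p (fun a => (Nat.card {x // a ∈ A x} : ℝ)) +
        expect p (fun a => (Nat.card {x // a ∈ A x} : ℝ)) ^ 2 := by
  have := Fintype.ofFinite X
  have hpair : ∀ x y, prob p (A x ∩ A y) ≤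
      (if x = y then prob p (A x) else 0) + prob p (A x) * prob p (A y) := by
    intro x y
    split_ifs with hxy
    · subst hxy
      rw [Set.inter_self]
      exact le_add_of_nonneg_right (mul_self_nonneg _)
    · rw [zero_add]
      exact hA hxy
  calc expect p (fun a => (Nat.card {x // a ∈ A x} : ℝ) ^ 2)
      = ∑ x, ∑ y, prob p (A x ∩ A y) := expect_natCard_mem_sq p A
    _ ≤ ∑ x, ∑ y, ((if x = y then prob p (A x) else 0) + prob p (A x) * prob p (A y)) := by
        gcongr with x _ y _
        exact hpair x y
    _ = ∑ x, prob p (A x) + (∑ x, prob p (A x)) ^ 2 := by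
        simp [Finset.sum_add_distrib, sq, Finset.sum_mul_sum]
    _ = _ := by rw [expect_natCard_mem]

theorem prob_eq_div_of_natCard_mem_eq [Fintype X] (hp : ∑ a, p a = 1) {A : X → Set α} {s : ℕ}
    (hs : ∀ a, Nat.card {x // a ∈ A x} = s) (h₁ : ∀ x y, prob p (A x) = prob p (A y)) (x : X) :
    prob p (A x) = s / Fintype.card X := by
  have : Nonempty X := ⟨x⟩
  rw [eq_div_iff (by positivity)]
  calc prob p (A x) * Fintype.card X
      = ∑ y, prob p (A y) := by simp [fun y => h₁ y x, mul_comm]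
    _ = s := by simp only [← expect_natCard_mem, hs, expect_const hp]

theorem prob_inter_le_mul_of_natCard_mem_eq [Finite X] (hp : ∑ a, p a = 1) {A : X → Set α} {s : ℕ}
    (hs : ∀ a, Nat.card {x // a ∈ A x} = s) (h₁ : ∀ x y, prob p (A x) = prob p (A y))
    (h₂ : ∀ x y x' y', x ≠ y → x' ≠ y' → prob p (A x ∩ A y) = prob p (A x' ∩ A y')) :
    Pairwise fun x y => prob p (A x ∩ A y) ≤ prob p (A x) * prob p (A y) := by
  intro x y hxy
  have := Fintype.ofFinite X
  set v : ℝ := (Fintype.card X : ℝ)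
  set l := prob p (A x ∩ A y)
  have hv : 1 < v := Nat.one_lt_cast.2 (Fintype.one_lt_card_iff.2 ⟨x, y, hxy⟩)
  have hprob := prob_eq_div_of_natCard_mem_eq hp hs h₁
  have hsv : (s : ℝ) ≤ v := by
    obtain ⟨a⟩ : Nonempty α := by
      by_contra h
      simp [not_nonempty_iff.1 h] at hp
    rw [← hs a, Nat.card_eq_fintype_card]
    exact Nat.cast_le.2 (Fintype.card_subtype_le _)
  have hpair : ∀ x' y', prob p (A x' ∩ A y') = l + if x' = y' then s / v - l else 0 := by
    intro x' y'
    split_ifs with h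
    · rw [h, Set.inter_self, hprob, add_sub_cancel]
    · rw [add_zero, h₂ x' y' x y h hxy]
  have hcount : v * (v - 1) * l = s ^ 2 - s := by
    have h := expect_natCard_mem_sq p A
    simp only [hs, expect_const hp, hpair, Finset.sum_add_distrib, Finset.sum_const,
      Finset.sum_ite_eq, Finset.mem_univ, if_true, Finset.card_univ, nsmul_eq_mul] at h
    rw [h]
    field_simp
    ring
  rw [hprob, hprob, div_mul_div_comm, le_div_iff₀ (by positivity)]
  have hv' : 0 < v - 1 := sub_pos.2 hv
  refine le_of_mul_le_mul_left ?_ hv'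
  calc (v - 1) * (l * (v * v))
      = v * (s ^ 2 - s) := by rw [← hcount]; ring
    _ ≤ (v - 1) * (s * s) := by nlinarith [mul_le_mul_of_nonneg_left hsv s.cast_nonneg]

end FiniteProbability

section AffineGeometry

open Module

variable {K V P : Type*} [DivisionRing K] [AddCommGroup V] [Module K V] [AddTorsor V P]

theorem exists_linearEquiv_apply_eq {u v : V} (hu : u ≠ 0) (hv : v ≠ 0) :
    ∃ e : V ≃ₗ[K] V, e u = v := by
  obtain ⟨e, he⟩ := Submodule.exists_linearEquiv_restrict_eq
    (LinearEquiv.coord K V u hu ≪≫ₗ LinearEquiv.toSpanNonzeroSingleton K V v hv)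
  have heu := he ⟨u, Submodule.mem_span_singleton_self u⟩
  exact ⟨e, by simpa [LinearEquiv.coord_self] using heu.symm⟩

variable (K) in
theorem exists_affineEquiv_apply_eq_and_apply_eq {x y x' y' : P} (h : x ≠ y) (h' : x' ≠ y') :
    ∃ e : P ≃ᵃ[K] P, e x = x' ∧ e y = y' := by
  obtain ⟨e, he⟩ := exists_linearEquiv_apply_eq (K := K)
    (vsub_ne_zero.2 h.symm) (vsub_ne_zero.2 h'.symm)
  exact ⟨.ofLinearEquiv e x x', by simp, by simp [he]⟩

variable (K V) in
theorem exists_submodule_finrank_eq {d : ℕ} (hd : d ≤ finrank K V) :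
    ∃ S : Submodule K V, finrank K S = d := by
  obtain ⟨b, hb⟩ := exists_linearIndependent_of_le_finrank hd
  exact ⟨Submodule.span K (Set.range b), by simp [finrank_span_eq_card hb]⟩

theorem natCard_affineSubspace [Module.Finite K V] (A : AffineSubspace K P) [Nonempty A] :
    Nat.card A = Nat.card K ^ finrank K A.direction := by
  rw [← natCard_eq_pow_finrank, Nat.card_congr (Equiv.vaddConst (Classical.arbitrary A))]

end AffineGeometry

section Flats

variable {n k : ℕ}

theorem nonempty_flat (n k : ℕ) : Nonempty (Flat n k) := by
  obtain ⟨S, hS⟩ := exists_submodule_finrank_eq (ZMod 2) (F2n n) (d := n - k) (by simp)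
  exact ⟨⟨S.toAffineSubspace, _, rfl, S.nonempty, by rwa [Submodule.toAffineSubspace_direction]⟩⟩

theorem q0_nonneg (W : Flat n k) : 0 ≤ q0 n k W := by
  unfold q0
  positivity

theorem sum_q0 (n k : ℕ) : ∑ W, q0 n k W = 1 := by
  have := nonempty_flat n k
  simp [q0]

theorem natCard_flat (W : Flat n k) : Nat.card W.1 = 2 ^ (n - k) := by
  obtain ⟨_, A, rfl, hne, hd⟩ := W
  have : Nonempty A := hne.to_subtype
  simpa [hd] using natCard_affineSubspace A

theorem IsFlat.image {W : Set (F2n n)} (hW : IsFlat n k W) (e : F2n n ≃ᵃ[ZMod 2] F2n n) :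
    IsFlat n k (e '' W) := by
  obtain ⟨A, rfl, hne, hd⟩ := hW
  refine ⟨A.map e.toAffineMap, A.coe_map _, hne.image e, ?_⟩
  rw [AffineSubspace.map_direction, ← hd]
  exact e.linear.finrank_map_eq A.direction

/-- The permutation `W ↦ e '' W` of the `k`-flats induced by an affine automorphism `e`. -/
noncomputable def flatEquiv (k : ℕ) (e : F2n n ≃ᵃ[ZMod 2] F2n n) : Flat n k ≃ Flat n k where
  toFun W := ⟨e '' W.1, W.2.image e⟩
  invFun W := ⟨e.symm '' W.1, W.2.image e.symm⟩
  left_inv W := Subtype.ext (e.toEquiv.symm_image_image W.1)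
  right_inv W := Subtype.ext (e.toEquiv.image_symm_image W.1)

/-- The event that a random `k`-flat passes through `x`. -/
def flatsThrough (k : ℕ) (x : F2n n) : Set (Flat n k) := {W | x ∈ W.1}

theorem flatEquiv_preimage_flatsThrough (e : F2n n ≃ᵃ[ZMod 2] F2n n) (x : F2n n) :
    flatEquiv k e ⁻¹' flatsThrough k (e x) = flatsThrough k x :=
  Set.ext fun _ => e.injective.mem_set_image

theorem prob_flatsThrough_apply (e : F2n n ≃ᵃ[ZMod 2] F2n n) (x : F2n n) :
    prob (q0 n k) (flatsThrough k (e x)) = prob (q0 n k) (flatsThrough k x) := by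
  rw [← flatEquiv_preimage_flatsThrough e x]
  exact (prob_preimage_equiv (flatEquiv k e) (q0 n k) _).symm

theorem prob_flatsThrough_inter_apply (e : F2n n ≃ᵃ[ZMod 2] F2n n) (x y : F2n n) :
    prob (q0 n k) (flatsThrough k (e x) ∩ flatsThrough k (e y)) =
      prob (q0 n k) (flatsThrough k x ∩ flatsThrough k y) := by
  rw [← flatEquiv_preimage_flatsThrough e x, ← flatEquiv_preimage_flatsThrough e y]
  exact (prob_preimage_equiv (flatEquiv k e) (q0 n k) _).symm

theorem prob_flatsThrough_eq (x y : F2n n) :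
    prob (q0 n k) (flatsThrough k x) = prob (q0 n k) (flatsThrough k y) := by
  simpa using prob_flatsThrough_apply (AffineEquiv.constVAdd (ZMod 2) (F2n n) (x - y)) y

theorem prob_flatsThrough (hkn : k ≤ n) (x : F2n n) :
    prob (q0 n k) (flatsThrough k x) = ((2 : ℝ) ^ k)⁻¹ := by
  rw [prob_eq_div_of_natCard_mem_eq (A := flatsThrough k) (sum_q0 n k) natCard_flat
    prob_flatsThrough_eq x]
  simp only [Fintype.card_pi_const, ZMod.card, Nat.cast_pow, Nat.cast_ofNat]
  rw [pow_sub₀ _ two_ne_zero hkn]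
  exact mul_div_cancel_left₀ _ (by positivity)

theorem prob_flatsThrough_inter_le :
    Pairwise fun x y : F2n n => prob (q0 n k) (flatsThrough k x ∩ flatsThrough k y) ≤
      prob (q0 n k) (flatsThrough k x) * prob (q0 n k) (flatsThrough k y) := by
  refine prob_inter_le_mul_of_natCard_mem_eq (sum_q0 n k) natCard_flat
    prob_flatsThrough_eq fun x y x' y' h h' => ?_
  obtain ⟨e, rfl, rfl⟩ := exists_affineEquiv_apply_eq_and_apply_eq (ZMod 2) h h'
  exact (prob_flatsThrough_inter_apply e x y).symm

end Flats

section Moments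

variable {n k m : ℕ}

/-- The event that `x` lies on none of the `m` sampled flats, so that `Z` counts the points `x`
for which it occurs. -/
def satEvent (k m : ℕ) (x : F2n n) : Set (Fin m → Flat n k) :=
  Set.univ.pi fun _ => (flatsThrough k x)ᶜ

theorem Z_eq_natCard_mem_satEvent (V : Fin m → Flat n k) :
    Z n k m V = Nat.card {x // V ∈ satEvent k m x} := by
  simp only [satEvent, Set.mem_univ_pi]
  rfl

theorem prob_Punif_univ_pi (E : Set (Flat n k)) :
    prob (Punif n k m) (Set.univ.pi fun _ => E) = prob (q0 n k) E ^ m :=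
  (prob_univ_pi (fun _ => q0 n k) _).trans (Fin.prod_const m _)

theorem prob_satEvent_inter_le :
    Pairwise fun x y : F2n n => prob (Punif n k m) (satEvent k m x ∩ satEvent k m y) ≤
      prob (Punif n k m) (satEvent k m x) * prob (Punif n k m) (satEvent k m y) := by
  intro x y hxy
  simp only [satEvent, ← Set.pi_inter_distrib, prob_Punif_univ_pi, ← mul_pow]
  exact pow_le_pow_left₀ (prob_nonneg q0_nonneg _)
    (prob_compl_inter_compl_le (sum_q0 n k) (prob_flatsThrough_inter_le hxy)) m

theorem expect_Z (hkn : k ≤ n) (m : ℕ) :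
    expect (Punif n k m) (fun V => (Z n k m V : ℝ)) = 2 ^ n * (1 - ((2 : ℝ) ^ k)⁻¹) ^ m := by
  simp only [Z_eq_natCard_mem_satEvent, expect_natCard_mem, satEvent, prob_Punif_univ_pi,
    prob_compl (sum_q0 n k), prob_flatsThrough hkn]
  simp [ZMod.card]

theorem expect_Z_pos (hk : 1 ≤ k) (hkn : k ≤ n) (m : ℕ) :
    0 < expect (Punif n k m) (fun V => (Z n k m V : ℝ)) := by
  have : ((2 : ℝ) ^ k)⁻¹ < 1 := inv_lt_one_of_one_lt₀ (one_lt_pow₀ one_lt_two (by lia))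
  rw [expect_Z hkn]
  exact mul_pos (by positivity) (pow_pos (sub_pos.2 this) m)

theorem expect_Z_sq_le (n k m : ℕ) :
    expect (Punif n k m) (fun V => (Z n k m V : ℝ) ^ 2) ≤
      expect (Punif n k m) (fun V => (Z n k m V : ℝ)) +
        expect (Punif n k m) (fun V => (Z n k m V : ℝ)) ^ 2 := by
  simp only [Z_eq_natCard_mem_satEvent]
  exact expect_natCard_mem_sq_le prob_satEvent_inter_le

end Moments

theorem stmt4_general {n k : ℕ} (hk : 1 ≤ k) (hkn : k ≤ n) (m : ℕ) :
    expect (Punif n k m) (fun V => (Z n k m V : ℝ) ^ 2) /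
        expect (Punif n k m) (fun V => (Z n k m V : ℝ)) ^ 2 ≤
      1 + (expect (Punif n k m) (fun V => (Z n k m V : ℝ)))⁻¹ := by
  have hpos := expect_Z_pos hk hkn m
  rw [div_le_iff₀ (pow_pos hpos 2)]
  refine (expect_Z_sq_le n k m).trans_eq ?_
  field_simp
  ring

theorem stmt4 (k : ℕ) (hk : 1 ≤ k) (Δ : ℝ) (hΔ : 0 < Δ) :
    ∀ ε > (0:ℝ), ∃ N : ℕ, ∀ n ≥ N, k ≤ n →
      expect (Punif n k ⌈Δ * (n:ℝ)⌉₊) (fun V => ((Z n k ⌈Δ * (n:ℝ)⌉₊ V : ℝ))^2) /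
          (expect (Punif n k ⌈Δ * (n:ℝ)⌉₊) (fun V => (Z n k ⌈Δ * (n:ℝ)⌉₊ V : ℝ)))^2
        ≤ 1 + ε + (expect (Punif n k ⌈Δ * (n:ℝ)⌉₊) (fun V => (Z n k ⌈Δ * (n:ℝ)⌉₊ V : ℝ)))⁻¹ := by
  intro ε hε
  refine ⟨0, fun n _ hkn => (stmt4_general hk hkn _).trans ?_⟩
  linarith
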